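/- arXiv:2603.16696 — 2 statements merged into one kernel-verified Lean document; each statement's English description precedes it below -/
import Mathlib

section
/- With the data below, for every α ∈ (η₁, η₂] one has Q(α) = 2 + (8 l₁² / ((k(α)² − l₁²)(l₁² − 1))) · ( E(k(α))/K(k(α)) + (k(α)² − l₁²)/l₁² − ((k(α)² − l₁⁴)/l₁²) · Π(l₁², k(α))/K(k(α)) ). -/
/-- Complete elliptic integral of the first kind:
`K(k) = ∫₀¹ ds/√((1−s²)(1−k²s²))`. -/
noncomputable def ellK (k : ℝ) : ℝ :=
  ∫ s in (0 : ℝ)..1, 1 / Real.sqrt ((1 - s ^ 2) * (1 - k ^ 2 * s ^ 2))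

/-- Complete elliptic integral of the second kind:
`E(k) = ∫₀¹ √((1−k²s²)/(1−s²)) ds`. -/
noncomputable def ellE (k : ℝ) : ℝ :=
  ∫ s in (0 : ℝ)..1, Real.sqrt ((1 - k ^ 2 * s ^ 2) / (1 - s ^ 2))

/-- Complete elliptic integral of the third kind:
`Π(m,k) = ∫₀¹ ds/((1−ms²)√((1−s²)(1−k²s²)))`. -/
noncomputable def ellPi (m k : ℝ) : ℝ :=
  ∫ s in (0 : ℝ)..1, 1 / ((1 - m * s ^ 2) * Real.sqrt ((1 - s ^ 2) * (1 - k ^ 2 * s ^ 2)))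

/-- `l(x) = (x−1)/(x+1)`. -/
noncomputable def lpar (x : ℝ) : ℝ := (x - 1) / (x + 1)

/-- `k(α) = l₁/l(α)` (with `l₁ = l(η₁)`). -/
noncomputable def kfun (η₁ α : ℝ) : ℝ := lpar η₁ / lpar α

/-- `ρ_α(s) = √((η₁−s)(s−η₁⁻¹)(α−s)(s−α⁻¹))`. -/
noncomputable def rho (η₁ α s : ℝ) : ℝ :=
  Real.sqrt ((η₁ - s) * (s - η₁⁻¹) * (α - s) * (s - α⁻¹))

/-- `Q(α) = (∫_{η₁⁻¹}^{η₁} (s²+s⁻²)/ρ_α(s) ds)/(∫_{η₁⁻¹}^{η₁} ds/ρ_α(s))`. -/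
noncomputable def Qfun (η₁ α : ℝ) : ℝ :=
  (∫ s in η₁⁻¹..η₁, (s ^ 2 + (s⁻¹) ^ 2) / rho η₁ α s) /
    (∫ s in η₁⁻¹..η₁, 1 / rho η₁ α s)

open MeasureTheory Set

lemma aux_base_int : IntervalIntegrable (fun t : ℝ => 1 / Real.sqrt (1 - t ^ 2)) volume (-1) 1 := by
  apply intervalIntegral.intervalIntegrable_deriv_of_nonneg (g := Real.arcsin)
  · exact Real.continuous_arcsin.continuousOn
  · intro x hx
    norm_num at hx
    exact Real.hasDerivAt_arcsin (by linarith) (by linarith)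
  · intro x hx
    positivity

lemma aux_pos {k t : ℝ} (hk0 : 0 < k) (hk : k < 1) (h1 : -1 ≤ t) (h2 : t ≤ 1) :
    0 < 1 - k ^ 2 * t ^ 2 := by
  have : t ^ 2 ≤ 1 := by nlinarith
  nlinarith [sq_nonneg t, mul_pos hk0 hk0]

lemma aux_int {k : ℝ} (hk0 : 0 < k) (hk : k < 1) (g : ℝ → ℝ) (hg : ContinuousOn g (Icc (-1) 1)) :
    IntervalIntegrable (fun t : ℝ => g t / Real.sqrt ((1 - t ^ 2) * (1 - k ^ 2 * t ^ 2)))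
      volume (-1) 1 := by
  have hu : uIcc (-1 : ℝ) 1 = Icc (-1) 1 := uIcc_of_le (by norm_num)
  have h := aux_base_int.mul_continuousOn (g := fun t => g t / Real.sqrt (1 - k ^ 2 * t ^ 2)) (by
    rw [hu]
    apply hg.div
    · fun_prop
    · intro x hx
      exact (Real.sqrt_pos.2 (aux_pos hk0 hk hx.1 hx.2)).ne')
  refine h.congr ?_
  intro t ht
  rw [uIoc_of_le (by norm_num)] at ht
  have := aux_pos hk0 hk ht.1.le ht.2
  have h1 : 0 ≤ 1 - t ^ 2 := by nlinarith [ht.1, ht.2]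
  simp only
  rw [Real.sqrt_mul h1]
  rw [div_mul_div_comm, one_mul]

lemma aux_even {k : ℝ} (hk0 : 0 < k) (hk : k < 1) (g : ℝ → ℝ) (hg : ContinuousOn g (Icc (-1) 1))
    (he : ∀ t, g (-t) = g t) :
    ∫ t in (-1 : ℝ)..1, g t / Real.sqrt ((1 - t ^ 2) * (1 - k ^ 2 * t ^ 2)) =
      2 * ∫ t in (0 : ℝ)..1, g t / Real.sqrt ((1 - t ^ 2) * (1 - k ^ 2 * t ^ 2)) := by
  have h := aux_int hk0 hk g hg
  have ha : IntervalIntegrable (fun t : ℝ => g t / Real.sqrt ((1 - t ^ 2) * (1 - k ^ 2 * t ^ 2)))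
      volume (-1) 0 := h.mono_set (by
        rw [uIcc_of_le (by norm_num), uIcc_of_le (by norm_num)]
        exact Icc_subset_Icc (by norm_num) (by norm_num))
  have hb : IntervalIntegrable (fun t : ℝ => g t / Real.sqrt ((1 - t ^ 2) * (1 - k ^ 2 * t ^ 2)))
      volume 0 1 := h.mono_set (by
        rw [uIcc_of_le (by norm_num), uIcc_of_le (by norm_num)]
        exact Icc_subset_Icc (by norm_num) (by norm_num))
  rw [← intervalIntegral.integral_add_adjacent_intervals ha hb, two_mul]
  congr 1
  have := intervalIntegral.integral_comp_neg (a := 0) (b := 1)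
    (fun t : ℝ => g t / Real.sqrt ((1 - t ^ 2) * (1 - k ^ 2 * t ^ 2)))
  simp only [he, neg_sq, neg_zero] at this
  exact this.symm

lemma aux_int01 {k : ℝ} (hk0 : 0 < k) (hk : k < 1) (g : ℝ → ℝ) (hg : ContinuousOn g (Icc (-1) 1)) :
    IntervalIntegrable (fun t : ℝ => g t / Real.sqrt ((1 - t ^ 2) * (1 - k ^ 2 * t ^ 2)))
      volume 0 1 := (aux_int hk0 hk g hg).mono_set (by
        rw [uIcc_of_le (by norm_num), uIcc_of_le (by norm_num)]
        exact Icc_subset_Icc (by norm_num) (by norm_num))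

lemma aux_N {l t : ℝ} (hl0 : 0 < l) (hl : l < 1) (h1 : -1 ≤ t) (h2 : t ≤ 1) :
    0 < 1 - l * t := by nlinarith

lemma aux_cov {l1 l : ℝ} (η α : ℝ) (hη : η = (1 + l1) / (1 - l1)) (hα : α = (1 + l) / (1 - l))
    (h0 : 0 < l1) (h1 : l1 < l) (h2 : l < 1) (g : ℝ → ℝ) :
    ∫ s in η⁻¹..η, g s / rho η α s =
      (Real.sqrt ((1 - l1 ^ 2) * (1 - l ^ 2)) / (2 * l)) *
        ∫ t in (-1 : ℝ)..1, g ((1 + l1 * t) / (1 - l1 * t)) /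
          Real.sqrt ((1 - t ^ 2) * (1 - (l1 / l) ^ 2 * t ^ 2)) := by
  have hl0 : 0 < l := h0.trans h1
  have hl11 : l1 < 1 := h1.trans h2
  have a1 : 0 < 1 - l1 := by linarith
  have a2 : 0 < 1 - l := by linarith
  have hηi : η⁻¹ = (1 - l1) / (1 + l1) := by rw [hη, inv_div]
  have hαi : α⁻¹ = (1 - l) / (1 + l) := by rw [hα, inv_div]
  have hle : η⁻¹ ≤ η := by
    rw [hηi, hη, div_le_div_iff₀ (by linarith) a1]; nlinarith
  rw [intervalIntegral.integral_of_le hle, intervalIntegral.integral_of_le (by norm_num),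
    integral_Ioc_eq_integral_Ioo, integral_Ioc_eq_integral_Ioo, ← integral_const_mul]
  have himg : (fun t : ℝ => (1 + l1 * t) / (1 - l1 * t)) '' Ioo (-1) 1 = Ioo η⁻¹ η := by
    ext s
    constructor
    · rintro ⟨t, ⟨ht1, ht2⟩, rfl⟩
      have hN := aux_N h0 hl11 ht1.le ht2.le
      simp only [mem_Ioo]
      rw [hηi, hη, div_lt_div_iff₀ (by linarith) hN, div_lt_div_iff₀ hN a1]
      constructor <;> nlinarith
    · rintro ⟨hs1, hs2⟩
      rw [hηi, div_lt_iff₀ (by linarith)] at hs1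
      rw [hη, lt_div_iff₀ a1] at hs2
      have hs : 0 < s + 1 := by nlinarith
      refine ⟨(s - 1) / (l1 * (s + 1)), ⟨?_, ?_⟩, ?_⟩
      · rw [lt_div_iff₀ (by positivity)]; nlinarith
      · rw [div_lt_iff₀ (by positivity)]; nlinarith
      · simp only
        have e : l1 * ((s - 1) / (l1 * (s + 1))) = (s - 1) / (s + 1) := by field_simp
        rw [e]
        have e2 : 1 - (s - 1) / (s + 1) = 2 / (s + 1) := by field_simp; ring
        rw [e2]; field_simp; ring
  rw [← himg, integral_image_eq_integral_abs_deriv_smul (f' := fun t => 2 * l1 / (1 - l1 * t) ^ 2)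
    measurableSet_Ioo]
  · apply setIntegral_congr_fun measurableSet_Ioo
    rintro t ⟨ht1, ht2⟩
    have hN := aux_N h0 hl11 ht1.le ht2.le
    have hk : l1 / l < 1 := by rw [div_lt_one hl0]; exact h1
    have hP := aux_pos (div_pos h0 hl0) hk ht1.le ht2.le
    have hT : 0 < 1 - t ^ 2 := by nlinarith
    have b1 : 0 < 1 - l1 ^ 2 := by nlinarith
    have b2 : 0 < 1 - l ^ 2 := by nlinarith
    have hr : rho η α ((1 + l1 * t) / (1 - l1 * t)) =
        4 * l1 * l / (1 - l1 * t) ^ 2 * Real.sqrt ((1 - t ^ 2) * (1 - (l1 / l) ^ 2 * t ^ 2)) /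
          Real.sqrt ((1 - l1 ^ 2) * (1 - l ^ 2)) := by
      unfold rho
      have c : (4 * l1 * l / (1 - l1 * t) ^ 2) = Real.sqrt ((4 * l1 * l / (1 - l1 * t) ^ 2) ^ 2) := by
        rw [Real.sqrt_sq]; positivity
      rw [c, ← Real.sqrt_mul (by positivity), ← Real.sqrt_div (by positivity)]
      congr 1
      rw [hηi, hαi, hη, hα]
      have b1' : 1 - l1 ^ 2 = (1 - l1) * (1 + l1) := by ring
      have b2' : 1 - l ^ 2 = (1 - l) * (1 + l) := by ring
      rw [b1', b2']
      have c1 := a1.ne'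
      have c2 := a2.ne'
      have c3 := hN.ne'
      field_simp
      ring
    have hs1 : 0 < Real.sqrt ((1 - t ^ 2) * (1 - (l1 / l) ^ 2 * t ^ 2)) := Real.sqrt_pos.2 (by positivity)
    have hs2 : 0 < Real.sqrt ((1 - l1 ^ 2) * (1 - l ^ 2)) := Real.sqrt_pos.2 (by positivity)
    simp only [smul_eq_mul]
    rw [abs_of_pos (by positivity), hr]
    generalize Real.sqrt ((1 - t ^ 2) * (1 - (l1 / l) ^ 2 * t ^ 2)) = A at *
    generalize Real.sqrt ((1 - l1 ^ 2) * (1 - l ^ 2)) = B at *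
    generalize g ((1 + l1 * t) / (1 - l1 * t)) = G at *
    have c3 := hN.ne'
    field_simp
    ring
  · rintro t ⟨ht1, ht2⟩
    have hN := aux_N h0 hl11 ht1.le ht2.le
    apply HasDerivAt.hasDerivWithinAt
    have d1 : HasDerivAt (fun t : ℝ => 1 + l1 * t) l1 t := by
      simpa using ((hasDerivAt_id t).const_mul l1).const_add 1
    have d2 : HasDerivAt (fun t : ℝ => 1 - l1 * t) (-l1) t := by
      simpa using ((hasDerivAt_id t).const_mul l1).const_sub 1
    refine HasDerivAt.congr_deriv (d1.div d2 hN.ne') ?_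
    congr 1
    ring
  · rintro t ⟨ht1, ht2⟩ u ⟨hu1, hu2⟩ h
    have hN := aux_N h0 hl11 ht1.le ht2.le
    have hN' := aux_N h0 hl11 hu1.le hu2.le
    simp only at h
    rw [div_eq_div_iff hN.ne' hN'.ne'] at h
    have : l1 * (t - u) = 0 := by linarith
    rcases mul_eq_zero.1 this with h | h <;> linarith

lemma aux_ftc {k m : ℝ} (hk0 : 0 < k) (hk : k < 1) (hm0 : 0 < m) (hm : m < 1) :
    ∫ t in (0 : ℝ)..1, (-2 * (k ^ 2 - m) * (m - 1) / (1 - m * t ^ 2) ^ 2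
      + (m * (1 - k ^ 2 * t ^ 2) + (k ^ 2 - m))
      + (2 * (k ^ 2 - m) * (m - 1) - (k ^ 2 - m ^ 2)) / (1 - m * t ^ 2)) /
        Real.sqrt ((1 - t ^ 2) * (1 - k ^ 2 * t ^ 2)) = 0 := by
  have hN : ∀ t ∈ Icc (-1 : ℝ) 1, 0 < 1 - m * t ^ 2 := by
    rintro t ⟨h1, h2⟩
    have : t ^ 2 ≤ 1 := by nlinarith
    nlinarith [sq_nonneg t]
  have := intervalIntegral.integral_eq_sub_of_hasDerivAt_of_le (a := 0) (b := 1)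
    (f := fun t => m ^ 2 * (t * Real.sqrt ((1 - t ^ 2) * (1 - k ^ 2 * t ^ 2)) / (1 - m * t ^ 2)))
    (f' := fun t => (-2 * (k ^ 2 - m) * (m - 1) / (1 - m * t ^ 2) ^ 2
      + (m * (1 - k ^ 2 * t ^ 2) + (k ^ 2 - m))
      + (2 * (k ^ 2 - m) * (m - 1) - (k ^ 2 - m ^ 2)) / (1 - m * t ^ 2)) /
        Real.sqrt ((1 - t ^ 2) * (1 - k ^ 2 * t ^ 2))) (by norm_num) ?_ ?_ ?_
  · rw [this]; norm_num
  · apply ContinuousOn.mul continuousOn_const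
    apply ContinuousOn.div (by fun_prop) (by fun_prop)
    rintro t ⟨h1, h2⟩
    exact (hN t ⟨by linarith, h2⟩).ne'
  · rintro t ⟨h1, h2⟩
    have hNt := hN t ⟨by linarith, h2.le⟩
    have hP := aux_pos hk0 hk (by linarith : -1 ≤ t) h2.le
    have hT : 0 < 1 - t ^ 2 := by nlinarith
    have hw : 0 < (1 - t ^ 2) * (1 - k ^ 2 * t ^ 2) := by positivity
    have e1 : HasDerivAt (fun t : ℝ => 1 - t ^ 2) (-(2 * t)) t := by
      simpa using ((hasDerivAt_id t).pow 2).const_sub 1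
    have e2 : ∀ c : ℝ, HasDerivAt (fun t : ℝ => 1 - c * t ^ 2) (-(c * (2 * t))) t := by
      intro c
      simpa using (((hasDerivAt_id t).pow 2).const_mul c).const_sub 1
    have e3 := (e1.mul (e2 (k ^ 2))).sqrt hw.ne'
    have e4 := (((hasDerivAt_id t).mul e3).div (e2 m) hNt.ne').const_mul (m ^ 2)
    refine HasDerivAt.congr_deriv e4 ?_
    have hs := Real.sqrt_pos.2 hw
    have hsq := Real.sq_sqrt hw.le
    simp only [Pi.mul_apply, id]
    generalize Real.sqrt ((1 - t ^ 2) * (1 - k ^ 2 * t ^ 2)) = A at *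
    have c3 := hNt.ne'
    field_simp
    rw [hsq]
    ring
  · apply aux_int01 hk0 hk (fun t => (-2 * (k ^ 2 - m) * (m - 1) / (1 - m * t ^ 2) ^ 2
      + (m * (1 - k ^ 2 * t ^ 2) + (k ^ 2 - m))
      + (2 * (k ^ 2 - m) * (m - 1) - (k ^ 2 - m ^ 2)) / (1 - m * t ^ 2)))
    apply ContinuousOn.add
    · apply ContinuousOn.add
      · exact ContinuousOn.div (by fun_prop) (by fun_prop) (fun t ht => pow_ne_zero 2 (hN t ht).ne')
      · fun_prop
    · exact ContinuousOn.div (by fun_prop) (by fun_prop) (fun t ht => (hN t ht).ne')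

lemma aux_E {k : ℝ} (hk0 : 0 < k) (hk : k < 1) :
    ellE k = ∫ t in (0 : ℝ)..1, (1 - k ^ 2 * t ^ 2) /
        Real.sqrt ((1 - t ^ 2) * (1 - k ^ 2 * t ^ 2)) := by
  unfold ellE
  apply intervalIntegral.integral_congr
  intro t ht
  rw [uIcc_of_le (by norm_num)] at ht
  have hP := aux_pos hk0 hk (by linarith [ht.1] : -1 ≤ t) ht.2
  have hT : 0 ≤ 1 - t ^ 2 := by nlinarith [ht.1, ht.2]
  simp only
  rw [Real.sqrt_div hP.le, Real.sqrt_mul hT]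
  have := Real.sqrt_pos.2 hP
  rcases (Real.sqrt_nonneg (1 - t ^ 2)).eq_or_lt with h | h
  · rw [← h]; simp
  · nth_rewrite 2 [← Real.sq_sqrt hP.le]
    field_simp

lemma aux_Kpos {k : ℝ} (hk0 : 0 < k) (hk : k < 1) : 0 < ellK k := by
  unfold ellK
  apply intervalIntegral.intervalIntegral_pos_of_pos_on
  · exact aux_int01 hk0 hk (fun _ => 1) continuousOn_const
  · intro t ht
    have hP := aux_pos hk0 hk (by linarith [ht.1] : -1 ≤ t) ht.2.le
    have hT : 0 < 1 - t ^ 2 := by nlinarith [ht.1, ht.2]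
    have := Real.sqrt_pos.2 (mul_pos hT hP)
    positivity
  · norm_num

lemma aux_main {k m : ℝ} (hk0 : 0 < k) (hk : k < 1) (hm0 : 0 < m) (hm : m < 1) :
    ∃ J : ℝ, -2 * (k ^ 2 - m) * (m - 1) * J + m * ellE k + (k ^ 2 - m) * ellK k
      + (2 * (k ^ 2 - m) * (m - 1) - (k ^ 2 - m ^ 2)) * ellPi m k = 0 ∧
      ∫ t in (0 : ℝ)..1, (2 + 16 * (m * t ^ 2) / (1 - m * t ^ 2) ^ 2) /
        Real.sqrt ((1 - t ^ 2) * (1 - k ^ 2 * t ^ 2)) = 2 * ellK k + 16 * (J - ellPi m k) := by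
  have hN : ∀ t ∈ Icc (-1 : ℝ) 1, 0 < 1 - m * t ^ 2 := by
    rintro t ⟨h1, h2⟩
    have : t ^ 2 ≤ 1 := by nlinarith
    nlinarith [sq_nonneg t]
  have iK := aux_int01 hk0 hk (fun _ => 1) continuousOn_const
  have iE := aux_int01 hk0 hk (fun t => 1 - k ^ 2 * t ^ 2) (by fun_prop)
  have iP := aux_int01 hk0 hk (fun t => 1 / (1 - m * t ^ 2))
    (ContinuousOn.div (by fun_prop) (by fun_prop) (fun t ht => (hN t ht).ne'))
  have iJ := aux_int01 hk0 hk (fun t => 1 / (1 - m * t ^ 2) ^ 2)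
    (ContinuousOn.div (by fun_prop) (by fun_prop) (fun t ht => pow_ne_zero 2 (hN t ht).ne'))
  have hPi : ellPi m k = ∫ t in (0 : ℝ)..1, (1 / (1 - m * t ^ 2)) /
        Real.sqrt ((1 - t ^ 2) * (1 - k ^ 2 * t ^ 2)) := by
    unfold ellPi
    simp only [div_div]
  have hKK : ellK k = ∫ t in (0 : ℝ)..1, 1 /
        Real.sqrt ((1 - t ^ 2) * (1 - k ^ 2 * t ^ 2)) := rfl
  refine ⟨∫ t in (0 : ℝ)..1, (1 / (1 - m * t ^ 2) ^ 2) /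
        Real.sqrt ((1 - t ^ 2) * (1 - k ^ 2 * t ^ 2)), ?_, ?_⟩
  · refine Eq.trans ?_ (aux_ftc hk0 hk hm0 hm)
    rw [aux_E hk0 hk, hPi, hKK, ← intervalIntegral.integral_const_mul,
      ← intervalIntegral.integral_const_mul, ← intervalIntegral.integral_const_mul,
      ← intervalIntegral.integral_const_mul,
      ← intervalIntegral.integral_add (iJ.const_mul _) (iE.const_mul _),
      ← intervalIntegral.integral_add ((iJ.const_mul _).add (iE.const_mul _)) (iK.const_mul _),
      ← intervalIntegral.integral_add (((iJ.const_mul _).add (iE.const_mul _)).add (iK.const_mul _))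
        (iP.const_mul _)]
    congr 1
    ext t
    ring
  · rw [hPi, hKK, ← intervalIntegral.integral_sub iJ iP, ← intervalIntegral.integral_const_mul,
      ← intervalIntegral.integral_const_mul,
      ← intervalIntegral.integral_add (iK.const_mul _) ((iJ.sub iP).const_mul _)]
    apply intervalIntegral.integral_congr
    intro t ht
    rw [uIcc_of_le (by norm_num)] at ht
    have := (hN t ⟨by linarith [ht.1], ht.2⟩).ne'
    have e : 16 * (m * t ^ 2) / (1 - m * t ^ 2) ^ 2 =
      16 * (1 / (1 - m * t ^ 2) ^ 2 - 1 / (1 - m * t ^ 2)) := by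
      field_simp; ring
    simp only
    rw [e]
    ring

theorem stmt16 (η₁ η₂ : ℝ) (h1 : 1 < η₁) (h2 : η₁ < η₂) :
    ∀ α ∈ Set.Ioc η₁ η₂,
      Qfun η₁ α =
        2 + 8 * lpar η₁ ^ 2 /
            ((kfun η₁ α ^ 2 - lpar η₁ ^ 2) * (lpar η₁ ^ 2 - 1)) *
          (ellE (kfun η₁ α) / ellK (kfun η₁ α) +
            (kfun η₁ α ^ 2 - lpar η₁ ^ 2) / lpar η₁ ^ 2 -
            (kfun η₁ α ^ 2 - lpar η₁ ^ 4) / lpar η₁ ^ 2 *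
              (ellPi (lpar η₁ ^ 2) (kfun η₁ α) / ellK (kfun η₁ α))) := by
  intro α hα
  obtain ⟨hα1, -⟩ := hα
  have hl0 : 0 < lpar η₁ := by unfold lpar; exact div_pos (by linarith) (by linarith)
  have hll : lpar η₁ < lpar α := by
    unfold lpar; rw [div_lt_div_iff₀ (by linarith) (by linarith)]; nlinarith
  have hl1 : lpar α < 1 := by unfold lpar; rw [div_lt_one (by linarith)]; linarith
  have hinv : ∀ x : ℝ, 1 < x → x = (1 + lpar x) / (1 - lpar x) := by
    intro x hx
    have e1 : 1 - lpar x = 2 / (x + 1) := by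
      unfold lpar; have : x + 1 ≠ 0 := by linarith
      field_simp; ring
    have e2 : 1 + lpar x = 2 * x / (x + 1) := by
      unfold lpar; have : x + 1 ≠ 0 := by linarith
      field_simp; ring
    have : x + 1 ≠ 0 := by linarith
    rw [e1, e2]; field_simp
  have hl : 0 < lpar α := hl0.trans hll
  have hl11 : lpar η₁ < 1 := hll.trans hl1
  have hkd : kfun η₁ α = lpar η₁ / lpar α := rfl
  have hk0 : 0 < kfun η₁ α := div_pos hl0 hl
  have hk1 : kfun η₁ α < 1 := by rw [hkd, div_lt_one hl]; exact hll
  have hkl : lpar η₁ < kfun η₁ α := by rw [hkd, lt_div_iff₀ hl]; nlinarith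
  have hm0 : 0 < lpar η₁ ^ 2 := by positivity
  have hm1 : lpar η₁ ^ 2 < 1 := by nlinarith
  have hcov := aux_cov η₁ α (hinv _ h1) (hinv _ (h1.trans hα1)) hl0 hll hl1
  rw [← hkd] at hcov
  have hK := aux_Kpos hk0 hk1
  obtain ⟨J, hJ1, hJ2⟩ := aux_main hk0 hk1 hm0 hm1
  have hC : 0 < Real.sqrt ((1 - lpar η₁ ^ 2) * (1 - lpar α ^ 2)) / (2 * lpar α) := by
    have : 0 < 1 - lpar η₁ ^ 2 := by linarith
    have : 0 < 1 - lpar α ^ 2 := by nlinarith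
    have : 0 < Real.sqrt ((1 - lpar η₁ ^ 2) * (1 - lpar α ^ 2)) := Real.sqrt_pos.2 (by positivity)
    positivity
  have hN : ∀ t ∈ Icc (-1 : ℝ) 1, 0 < 1 - lpar η₁ ^ 2 * t ^ 2 := fun t ht =>
    aux_pos hl0 hl11 ht.1 ht.2
  have hden : ∫ s in η₁⁻¹..η₁, 1 / rho η₁ α s =
      Real.sqrt ((1 - lpar η₁ ^ 2) * (1 - lpar α ^ 2)) / (2 * lpar α) *
        (2 * ellK (kfun η₁ α)) := by
    rw [hcov (fun _ => 1), aux_even hk0 hk1 (fun _ => 1) continuousOn_const (fun _ => rfl)]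
    rfl
  have hnum : ∫ s in η₁⁻¹..η₁, (s ^ 2 + (s⁻¹) ^ 2) / rho η₁ α s =
      Real.sqrt ((1 - lpar η₁ ^ 2) * (1 - lpar α ^ 2)) / (2 * lpar α) *
        (2 * (2 * ellK (kfun η₁ α) + 16 * (J - ellPi (lpar η₁ ^ 2) (kfun η₁ α)))) := by
    rw [hcov (fun s => s ^ 2 + (s⁻¹) ^ 2), ← hJ2,
      ← aux_even hk0 hk1 (fun t => 2 + 16 * (lpar η₁ ^ 2 * t ^ 2) / (1 - lpar η₁ ^ 2 * t ^ 2) ^ 2)]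
    · congr 1
      apply intervalIntegral.integral_congr
      intro t ht
      rw [uIcc_of_le (by norm_num)] at ht
      have n1 := (aux_N hl0 hl11 ht.1 ht.2).ne'
      have n2 : 1 + lpar η₁ * t ≠ 0 := by
        have := aux_N (t := -t) hl0 hl11 (by linarith [ht.2]) (by linarith [ht.1])
        intro h
        linarith
      simp only
      congr 1
      have e : 1 - lpar η₁ ^ 2 * t ^ 2 = (1 - lpar η₁ * t) * (1 + lpar η₁ * t) := by ring
      rw [e, inv_div]
      field_simp
      ring
    · exact ContinuousOn.add (by fun_prop) (ContinuousOn.div (by fun_prop) (by fun_prop)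
        (fun t ht => pow_ne_zero 2 (hN t ht).ne'))
    · intro t
      simp only [neg_sq]
  unfold Qfun
  rw [hden, hnum, mul_div_mul_left _ _ hC.ne']
  have e1 : kfun η₁ α ^ 2 - lpar η₁ ^ 2 ≠ 0 := by nlinarith
  have e2 : lpar η₁ ^ 2 - 1 ≠ 0 := by linarith
  have e3 := hK.ne'
  have hJ : J = (lpar η₁ ^ 2 * ellE (kfun η₁ α) + (kfun η₁ α ^ 2 - lpar η₁ ^ 2) * ellK (kfun η₁ α)
      + (2 * (kfun η₁ α ^ 2 - lpar η₁ ^ 2) * (lpar η₁ ^ 2 - 1) - (kfun η₁ α ^ 2 - (lpar η₁ ^ 2) ^ 2))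
        * ellPi (lpar η₁ ^ 2) (kfun η₁ α)) /
        (2 * ((kfun η₁ α ^ 2 - lpar η₁ ^ 2) * (lpar η₁ ^ 2 - 1))) := by
    rw [eq_div_iff (by positivity)]
    linarith
  rw [hJ]
  field_simp
  ring
end

section
/- With the data below, set ξ_crit := N(η₂)/D(η₂). Then for every real ξ with ξ_crit < ξ < −(η₁ − η₁⁻¹)/ln η₁, there exists exactly one α ∈ (η₁, η₂) such that N(α) = ξ · D(α). -/
/-- `D(α) = α + α⁻¹ + 2 − 4Π(l₁², k(α))/K(k(α))`. -/
noncomputable def Dfun (η₁ α : ℝ) : ℝ :=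
  α + α⁻¹ + 2 - 4 * ellPi (lpar η₁ ^ 2) (kfun η₁ α) / ellK (kfun η₁ α)

/-- `N(α) = −α² − α⁻² + ((α + α⁻¹ + η₁ + η₁⁻¹)/2)·D(α) + Q(α)`. -/
noncomputable def Nfun (η₁ α : ℝ) : ℝ :=
  -α ^ 2 - (α⁻¹) ^ 2 + (α + α⁻¹ + η₁ + η₁⁻¹) / 2 * Dfun η₁ α + Qfun η₁ α


open MeasureTheory Set in
theorem subst_aux (a b : ℝ) (hab : a ≤ b) (f f' : ℝ → ℝ) (hf : ∀ x, x ∈ Icc a b → HasDerivAt f (f' x) x)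
    (hm : MonotoneOn f (Icc a b)) (F : ℝ → ℝ) :
    ∫ x in f a..f b, F x = ∫ x in a..b, f' x * F (f x) := by
  have hfab : f a ≤ f b := hm (left_mem_Icc.2 hab) (right_mem_Icc.2 hab) hab
  have him : f '' Icc a b = Icc (f a) (f b) := by
    apply Subset.antisymm
    · exact hm.image_Icc_subset
    · exact intermediate_value_Icc hab (fun x hx => (hf x hx).continuousAt.continuousWithinAt)
  rw [intervalIntegral.integral_of_le hfab, intervalIntegral.integral_of_le hab,
    ← integral_Icc_eq_integral_Ioc, ← integral_Icc_eq_integral_Ioc, ← him]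
  rw [integral_image_eq_integral_deriv_smul_of_monotoneOn measurableSet_Icc
    (fun x hx => (hf x hx).hasDerivWithinAt) hm]
  simp

open MeasureTheory Set in
theorem congr_Ioo (a b : ℝ) (hab : a ≤ b) (f g : ℝ → ℝ) (h : ∀ x ∈ Ioo a b, f x = g x) :
    ∫ x in a..b, f x = ∫ x in a..b, g x := by
  rw [intervalIntegral.integral_of_le hab, intervalIntegral.integral_of_le hab,
    integral_Ioc_eq_integral_Ioo, integral_Ioc_eq_integral_Ioo]
  exact setIntegral_congr_fun measurableSet_Ioo h

theorem subst_sin (F : ℝ → ℝ) :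
    ∫ x in (0:ℝ)..1, F x = ∫ x in (0:ℝ)..(Real.pi / 2), Real.cos x * F (Real.sin x) := by
  have := subst_aux 0 (Real.pi/2) (by positivity) Real.sin Real.cos
    (fun x _ => Real.hasDerivAt_sin x)
    (Real.strictMonoOn_sin.monotoneOn.mono (Set.Icc_subset_Icc (by linarith [Real.pi_pos]) le_rfl)) F
  simpa using this

theorem q_pos {m : ℝ} (hm : m < 1) (hm0 : 0 ≤ m) (x : ℝ) : 0 < 1 - m * Real.sin x ^ 2 := by
  nlinarith [Real.sin_sq_le_one x, sq_nonneg (Real.sin x)]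

theorem aux_cos {k x : ℝ} (hx : x ∈ Set.Ioo 0 (Real.pi / 2)) :
    Real.sqrt ((1 - Real.sin x ^ 2) * (1 - k * Real.sin x ^ 2)) = Real.cos x * Real.sqrt (1 - k * Real.sin x ^ 2)
    ∧ 0 < Real.cos x := by
  have hc : 0 < Real.cos x := Real.cos_pos_of_mem_Ioo ⟨by linarith [hx.1, Real.pi_pos], hx.2⟩
  refine ⟨?_, hc⟩
  rw [← Real.cos_sq', Real.sqrt_mul (sq_nonneg _), Real.sqrt_sq hc.le]

theorem ellK_eq (k : ℝ) : ellK k = ∫ x in (0:ℝ)..(Real.pi / 2), 1 / Real.sqrt (1 - k ^ 2 * Real.sin x ^ 2) := by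
  unfold ellK
  rw [subst_sin]
  refine congr_Ioo _ _ (by positivity) _ _ fun x hx => ?_
  obtain ⟨h, hc⟩ := aux_cos (k := k ^ 2) hx
  rw [h]
  field_simp

theorem ellPi_eq (m k : ℝ) : ellPi m k = ∫ x in (0:ℝ)..(Real.pi / 2), 1 / (1 - m * Real.sin x ^ 2) *
    (1 / Real.sqrt (1 - k ^ 2 * Real.sin x ^ 2)) := by
  unfold ellPi
  rw [subst_sin]
  refine congr_Ioo _ _ (by positivity) _ _ fun x hx => ?_
  obtain ⟨h, hc⟩ := aux_cos (k := k ^ 2) hx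
  rw [h]
  field_simp

/-- the parametrisation `s = (1 + L sin x)/(1 - L sin x)` -/
theorem phi_deriv {L : ℝ} (h0 : 0 < L) (h1 : L < 1) (x : ℝ) :
    HasDerivAt (fun x => (1 + L * Real.sin x) / (1 - L * Real.sin x))
      (2 * L * Real.cos x / (1 - L * Real.sin x) ^ 2) x := by
  have hne : 1 - L * Real.sin x ≠ 0 := by nlinarith [Real.sin_le_one x]
  have hs := (Real.hasDerivAt_sin x).const_mul L
  refine ((hs.const_add 1).div (hs.const_sub 1) hne).congr_deriv ?_
  ring

open Set in
theorem subst_phi {L : ℝ} (h0 : 0 < L) (h1 : L < 1) (F : ℝ → ℝ) :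
    ∫ s in ((1 + L) / (1 - L))⁻¹..((1 + L) / (1 - L)), F s =
      ∫ x in (-(Real.pi / 2))..(Real.pi / 2), 2 * L * Real.cos x / (1 - L * Real.sin x) ^ 2 *
        F ((1 + L * Real.sin x) / (1 - L * Real.sin x)) := by
  have hm : MonotoneOn (fun x => (1 + L * Real.sin x) / (1 - L * Real.sin x))
      (Icc (-(Real.pi / 2)) (Real.pi / 2)) := by
    intro x hx y hy hxy
    have hs := Real.strictMonoOn_sin.monotoneOn hx hy hxy
    have hx1 : 0 < 1 - L * Real.sin x := by nlinarith [Real.sin_le_one x]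
    have hy1 : 0 < 1 - L * Real.sin y := by nlinarith [Real.sin_le_one y]
    show (1 + L * Real.sin x) / (1 - L * Real.sin x) ≤ (1 + L * Real.sin y) / (1 - L * Real.sin y)
    rw [div_le_div_iff₀ hx1 hy1]
    nlinarith
  have := subst_aux (-(Real.pi/2)) (Real.pi/2) (by linarith [Real.pi_pos]) _ _
    (fun x _ => phi_deriv h0 h1 x) hm F
  simp only [Real.sin_neg, Real.sin_pi_div_two] at this
  rw [← this]
  congr 1
  · rw [inv_div]; ring
  · ring

theorem even_int (f : ℝ → ℝ) (hf : Continuous f) (he : ∀ x, f (-x) = f x) (a : ℝ) :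
    ∫ x in (-a)..a, f x = 2 * ∫ x in (0:ℝ)..a, f x := by
  rw [← intervalIntegral.integral_add_adjacent_intervals (hf.intervalIntegrable (-a) 0)
    (hf.intervalIntegrable 0 a)]
  have : ∫ x in (-a)..0, f x = ∫ x in (0:ℝ)..a, f x := by
    have h := intervalIntegral.integral_comp_neg (a := 0) (b := a) f
    rw [neg_zero] at h
    rw [← h]
    simp [he]
  rw [this]; ring

/-- `u = s + 1/s` along the parametrisation -/
noncomputable def uu (L x : ℝ) : ℝ := 4 / (1 - L ^ 2 * Real.sin x ^ 2) - 2

theorem lpar_mem {x : ℝ} (h : 1 < x) : 0 < lpar x ∧ lpar x < 1 ∧ x = (1 + lpar x) / (1 - lpar x) := by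
  unfold lpar
  refine ⟨div_pos (by linarith) (by linarith), (div_lt_one (by linarith)).2 (by linarith), ?_⟩
  have : x + 1 ≠ 0 := by linarith
  have h3 : 1 - (x - 1) / (x + 1) = 2 / (x + 1) := by field_simp; ring
  rw [h3]
  field_simp
  ring

theorem rho_eq {L l x : ℝ} (h0 : 0 < L) (h1 : L < l) (h2 : l < 1)
    (hx : x ∈ Set.Ioo (-(Real.pi / 2)) (Real.pi / 2)) :
    rho ((1 + L) / (1 - L)) ((1 + l) / (1 - l)) ((1 + L * Real.sin x) / (1 - L * Real.sin x)) =
      (2 * L * Real.cos x / (1 - L * Real.sin x) ^ 2) *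
        (Real.sqrt (4 * l ^ 2 / ((1 - L ^ 2) * (1 - l ^ 2))) *
        Real.sqrt (1 - (L / l) ^ 2 * Real.sin x ^ 2)) := by
  have hc : 0 < Real.cos x := Real.cos_pos_of_mem_Ioo hx
  have e1 : 0 < 1 - L * Real.sin x := by nlinarith [Real.sin_le_one x]
  have e2 : 0 < 1 - L := by linarith
  have e3 : 0 < 1 - l := by linarith
  have e4 : 0 < 1 + L := by linarith
  have e5 : 0 < 1 + l := by linarith
  have e6 : 0 < l := by linarith
  have hA : 0 ≤ 2 * L * Real.cos x / (1 - L * Real.sin x) ^ 2 := by positivity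
  have e7 : 1 - L ^ 2 = (1 - L) * (1 + L) := by ring
  have e8 : 1 - l ^ 2 = (1 - l) * (1 + l) := by ring
  rw [e7, e8]
  have hk : 0 ≤ 4 * l ^ 2 / (((1 - L) * (1 + L)) * ((1 - l) * (1 + l))) := by positivity
  rw [← Real.sqrt_mul hk]
  conv_rhs => rw [← Real.sqrt_sq hA]
  rw [← Real.sqrt_mul (sq_nonneg _)]
  unfold rho
  congr 1
  have hcs : Real.cos x ^ 2 = 1 - Real.sin x ^ 2 := Real.cos_sq' x
  rw [div_pow, mul_pow, hcs]
  field_simp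
  ring

theorem Qint_eq {L l : ℝ} (h0 : 0 < L) (h1 : L < l) (h2 : l < 1) (F g : ℝ → ℝ) (hg : Continuous g)
    (he : ∀ x, g (-x) = g x)
    (hF : ∀ x, F ((1 + L * Real.sin x) / (1 - L * Real.sin x)) = g x) :
    ∫ s in ((1 + L) / (1 - L))⁻¹..((1 + L) / (1 - L)), F s / rho ((1 + L) / (1 - L)) ((1 + l) / (1 - l)) s =
      2 / Real.sqrt (4 * l ^ 2 / ((1 - L ^ 2) * (1 - l ^ 2))) *
      ∫ x in (0:ℝ)..(Real.pi / 2), g x * (1 / Real.sqrt (1 - (L / l) ^ 2 * Real.sin x ^ 2)) := by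
  have hl : 0 < l := h0.trans h1
  have hk : (L / l) ^ 2 < 1 := by
    rw [div_pow, div_lt_one (by positivity)]; nlinarith
  have hq := fun x => q_pos hk (sq_nonneg _) x
  rw [subst_phi h0 (h1.trans h2)]
  rw [congr_Ioo _ _ (by linarith [Real.pi_pos]) _ (fun x =>
    1 / Real.sqrt (4 * l ^ 2 / ((1 - L ^ 2) * (1 - l ^ 2))) * (g x * (1 / Real.sqrt (1 - (L / l) ^ 2 * Real.sin x ^ 2)))), even_int]
  · rw [intervalIntegral.integral_const_mul]; ring
  · refine continuous_const.mul (hg.mul ?_)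
    refine Continuous.div continuous_const (by fun_prop) (fun x => (Real.sqrt_pos.2 (hq x)).ne')
  · intro x; simp [he]
  · intro x hx
    rw [rho_eq h0 h1 h2 hx, hF]
    have hc : 0 < Real.cos x := Real.cos_pos_of_mem_Ioo hx
    have e1 : 0 < 1 - L * Real.sin x := by nlinarith [Real.sin_le_one x]
    have := Real.sqrt_pos.2 (hq x)
    have h3 : 0 < Real.sqrt (4 * l ^ 2 / ((1 - L ^ 2) * (1 - l ^ 2))) := by
      apply Real.sqrt_pos.2
      have : 0 < 1 - L ^ 2 := by nlinarith
      have : 0 < 1 - l ^ 2 := by nlinarith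
      positivity
    field_simp

theorem uu_cont {L : ℝ} (h0 : 0 < L) (h1 : L < 1) : Continuous (uu L) := by
  unfold uu
  refine (Continuous.div continuous_const (by fun_prop) (fun x => (q_pos (by nlinarith) (sq_nonneg _) x).ne')).sub continuous_const

theorem W_cont {k : ℝ} (hk : k ^ 2 < 1) : Continuous fun x => 1 / Real.sqrt (1 - k ^ 2 * Real.sin x ^ 2) :=
  Continuous.div continuous_const (by fun_prop)
    (fun x => (Real.sqrt_pos.2 (q_pos hk (sq_nonneg _) x)).ne')

theorem Q_eq {L l : ℝ} (h0 : 0 < L) (h1 : L < l) (h2 : l < 1) :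
    Qfun ((1 + L) / (1 - L)) ((1 + l) / (1 - l)) =
      (∫ x in (0:ℝ)..(Real.pi / 2), (uu L x ^ 2 - 2) * (1 / Real.sqrt (1 - (L / l) ^ 2 * Real.sin x ^ 2))) /
        ellK (L / l) := by
  unfold Qfun
  have hu := uu_cont h0 (h1.trans h2)
  rw [Qint_eq h0 h1 h2 (fun s => s ^ 2 + (s⁻¹) ^ 2) (fun x => uu L x ^ 2 - 2) (by fun_prop)
    (by intro x; simp [uu]), Qint_eq h0 h1 h2 (fun _ => 1) (fun _ => 1) (by fun_prop) (by simp) (by simp)]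
  · rw [ellK_eq]
    have h3 : 0 < Real.sqrt (4 * l ^ 2 / ((1 - L ^ 2) * (1 - l ^ 2))) := by
      apply Real.sqrt_pos.2
      have : 0 < 1 - L ^ 2 := by nlinarith
      have : 0 < 1 - l ^ 2 := by nlinarith
      have : 0 < l := by linarith
      positivity
    simp only [one_mul]
    rw [mul_div_mul_left _ _ (by positivity)]
  · intro x
    have e1 : 0 < 1 - L * Real.sin x := by nlinarith [Real.sin_le_one x]
    have e2 : 0 < 1 + L * Real.sin x := by nlinarith [Real.neg_one_le_sin x]
    have e7 : 1 - L ^ 2 * Real.sin x ^ 2 = (1 - L * Real.sin x) * (1 + L * Real.sin x) := by ring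
    unfold uu
    rw [e7]
    field_simp
    ring

/-- moment functional -/
noncomputable def JJ (L b m : ℝ) : ℝ :=
  ∫ x in (0:ℝ)..(Real.pi / 2), (uu L x - m) *
    (Real.sqrt (b - uu L x) * (1 / Real.sqrt (1 - L ^ 2 * Real.sin x ^ 2)))

noncomputable def GG (L b : ℝ) : ℝ :=
  ∫ x in (0:ℝ)..(Real.pi / 2),
    (Real.sqrt (b - uu L x) * (1 / Real.sqrt (1 - L ^ 2 * Real.sin x ^ 2)))

/-- `b = α + 1/α` in terms of `l` -/
noncomputable def bb (l : ℝ) : ℝ := 4 / (1 - l ^ 2) - 2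

theorem bb_eq {l : ℝ} (h0 : 0 < l) (h1 : l < 1) :
    (1 + l) / (1 - l) + ((1 + l) / (1 - l))⁻¹ = bb l := by
  unfold bb
  have e3 : 0 < 1 - l := by linarith
  have e5 : 0 < 1 + l := by linarith
  have e8 : 1 - l ^ 2 = (1 - l) * (1 + l) := by ring
  rw [e8]
  field_simp
  ring

theorem uu_le {L : ℝ} (h0 : 0 < L) (h1 : L < 1) (x : ℝ) : uu L x ≤ bb L := by
  unfold uu bb
  have hq := q_pos (m := L ^ 2) (by nlinarith) (sq_nonneg _) x
  have h3 : 0 < 1 - L ^ 2 := by nlinarith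
  have : 1 - L ^ 2 ≤ 1 - L ^ 2 * Real.sin x ^ 2 := by
    nlinarith [Real.sin_sq_le_one x, sq_nonneg L]
  gcongr

theorem bb_lt {L l : ℝ} (h0 : 0 < L) (h1 : L < l) (h2 : l < 1) : bb L < bb l := by
  unfold bb
  have h3 : 0 < 1 - l ^ 2 := by nlinarith
  have : 1 - l ^ 2 < 1 - L ^ 2 := by nlinarith
  gcongr

theorem wt_cont {L : ℝ} (h0 : 0 < L) (h1 : L < 1) (b : ℝ) : Continuous fun x =>
    (Real.sqrt (b - uu L x) * (1 / Real.sqrt (1 - L ^ 2 * Real.sin x ^ 2))) := by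
  have hu := uu_cont h0 h1
  have := W_cont (k := L) (by nlinarith)
  fun_prop

theorem JJ_cont {L : ℝ} (h0 : 0 < L) (h1 : L < 1) : Continuous fun p : ℝ × ℝ => JJ L p.1 p.2 := by
  unfold JJ
  apply intervalIntegral.continuous_parametric_intervalIntegral_of_continuous'
  have hu := uu_cont h0 h1
  have := W_cont (k := L) (by nlinarith)
  unfold Function.uncurry
  have hw : Continuous fun a : (ℝ × ℝ) × ℝ => 1 / Real.sqrt (1 - L ^ 2 * Real.sin a.2 ^ 2) :=
    this.comp continuous_snd
  have hu2 : Continuous fun a : (ℝ × ℝ) × ℝ => uu L a.2 := hu.comp continuous_snd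
  exact (hu2.sub (by fun_prop)).mul
    ((Real.continuous_sqrt.comp ((continuous_fst.comp continuous_fst).sub hu2)).mul hw)

theorem GG_pos {L : ℝ} (h0 : 0 < L) (h1 : L < 1) {b : ℝ} (hb : bb L < b) : 0 < GG L b := by
  apply intervalIntegral.intervalIntegral_pos_of_pos
  · exact (wt_cont h0 h1 b).intervalIntegrable _ _
  · intro x
    have := Real.sqrt_pos.2 (q_pos (m := L ^ 2) (by nlinarith) (sq_nonneg _) x)
    have := Real.sqrt_pos.2 (show 0 < b - uu L x by linarith [uu_le h0 h1 x])
    positivity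
  · linarith [Real.pi_pos]

theorem JJ_shift {L : ℝ} (h0 : 0 < L) (h1 : L < 1) (b m m' : ℝ) :
    JJ L b m' = JJ L b m + (m - m') * GG L b := by
  unfold JJ GG
  have hu := uu_cont h0 h1
  have hw := wt_cont h0 h1 b
  rw [← intervalIntegral.integral_const_mul, ← intervalIntegral.integral_add
    (Continuous.intervalIntegrable (by fun_prop) _ _) (Continuous.intervalIntegrable (by fun_prop) _ _)]
  congr 1
  ext x
  ring

theorem key_pt {b b' u m : ℝ} (hb : b < b') (hu : u < b) (hm : m < b) :
    0 ≤ (u - m) * (Real.sqrt (b' - u) * Real.sqrt (b - m) - Real.sqrt (b - u) * Real.sqrt (b' - m)) := by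
  rw [← Real.sqrt_mul (by linarith), ← Real.sqrt_mul (by linarith)]
  rcases le_total m u with h | h
  · apply mul_nonneg (by linarith)
    rw [sub_nonneg]
    apply Real.sqrt_le_sqrt
    nlinarith
  · apply mul_nonneg_of_nonpos_of_nonpos (by linarith)
    rw [sub_nonpos]
    apply Real.sqrt_le_sqrt
    nlinarith

theorem JJ_mono {L : ℝ} (h0 : 0 < L) (h1 : L < 1) {b b' m : ℝ} (hb : bb L < b) (hb' : b < b')
    (hJ : JJ L b m = 0) : 0 ≤ JJ L b' m := by
  have hu := uu_cont h0 h1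
  have hw := wt_cont h0 h1 b
  have hw' := wt_cont h0 h1 b'
  have hpi : (0:ℝ) ≤ Real.pi / 2 := by positivity
  have hm : m < b := by
    by_contra hcon
    push Not at hcon
    have h3 := JJ_shift h0 h1 b m b
    have h4 : JJ L b b < 0 := by
      have : 0 < - JJ L b b := by
        unfold JJ
        rw [← intervalIntegral.integral_neg]
        apply intervalIntegral.intervalIntegral_pos_of_pos
        · exact Continuous.intervalIntegrable (by fun_prop) _ _
        · intro x
          have := Real.sqrt_pos.2 (q_pos (m := L ^ 2) (by nlinarith) (sq_nonneg _) x)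
          have h5 : 0 < b - uu L x := by linarith [uu_le h0 h1 x]
          have := Real.sqrt_pos.2 h5
          rw [← neg_mul, neg_sub]
          positivity
        · linarith [Real.pi_pos]
      linarith
    nlinarith [GG_pos h0 h1 hb]
  have h5 : 0 ≤ Real.sqrt (b - m) * JJ L b' m - Real.sqrt (b' - m) * JJ L b m := by
    unfold JJ
    rw [← intervalIntegral.integral_const_mul, ← intervalIntegral.integral_const_mul,
      ← intervalIntegral.integral_sub
        (Continuous.intervalIntegrable (by fun_prop) _ _) (Continuous.intervalIntegrable (by fun_prop) _ _)]
    apply intervalIntegral.integral_nonneg hpi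
    intro x _
    have := key_pt hb' (show uu L x < b by linarith [uu_le h0 h1 x]) hm
    have hs : 0 ≤ 1 / Real.sqrt (1 - L ^ 2 * Real.sin x ^ 2) := by positivity
    nlinarith [mul_nonneg this hs]
  rw [hJ, mul_zero, sub_zero] at h5
  exact nonneg_of_mul_nonneg_right h5 (Real.sqrt_pos.2 (by linarith))

theorem JJ_unique {L : ℝ} (h0 : 0 < L) (h1 : L < 1) {b b' ξ : ℝ} (hb : bb L < b) (hb' : b < b')
    (hJ : JJ L b ((bb L - b) / 2 - ξ) = 0) : JJ L b' ((bb L - b') / 2 - ξ) ≠ 0 := by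
  have h3 := JJ_mono h0 h1 hb hb' hJ
  have h4 := JJ_shift h0 h1 b' ((bb L - b) / 2 - ξ) ((bb L - b') / 2 - ξ)
  have h5 := GG_pos h0 h1 (hb.trans hb')
  nlinarith

theorem JJ_start {L : ℝ} (h0 : 0 < L) (h1 : L < 1) (m : ℝ) :
    ∃ c > 0, JJ L (bb L) m = c * (((1 + L) / (1 - L) - ((1 + L) / (1 - L))⁻¹) - m * Real.log ((1 + L) / (1 - L))) := by
  have h3 : 0 < 1 - L ^ 2 := by nlinarith
  have hq := fun x => q_pos (m := L ^ 2) (by nlinarith) (sq_nonneg _) x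
  have e2 : 0 < 1 - L := by linarith
  have e4 : 0 < 1 + L := by linarith
  have key : ∫ x in (0:ℝ)..(Real.pi / 2), (uu L x - m) * (Real.cos x / (1 - L ^ 2 * Real.sin x ^ 2))
      = 2 / (1 - L ^ 2) - m / (2 * L) * Real.log ((1 + L) / (1 - L)) := by
    have hd : ∀ x ∈ Set.uIcc (0:ℝ) (Real.pi / 2), HasDerivAt (fun x => 2 * Real.sin x / (1 - L ^ 2 * Real.sin x ^ 2)
        - m / (2 * L) * Real.log ((1 + L * Real.sin x) / (1 - L * Real.sin x)))
        ((uu L x - m) * (Real.cos x / (1 - L ^ 2 * Real.sin x ^ 2))) x := by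
      intro x _
      have hs := Real.hasDerivAt_sin x
      have f1 : 0 < 1 - L * Real.sin x := by nlinarith [Real.sin_le_one x]
      have f2 : 0 < 1 + L * Real.sin x := by nlinarith [Real.neg_one_le_sin x]
      have d1 := (hs.const_mul 2).div (((hs.pow 2).const_mul (L ^ 2)).const_sub 1) (hq x).ne'
      have d2 := ((phi_deriv h0 h1 x).log (div_pos f2 f1).ne').const_mul (m / (2 * L))
      refine (d1.sub d2).congr_deriv ?_
      have e7 : 1 - L ^ 2 * Real.sin x ^ 2 = (1 - L * Real.sin x) * (1 + L * Real.sin x) := by ring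
      unfold uu
      simp only [Pi.pow_apply, e7]
      field_simp
      norm_num
      left
      ring
    rw [intervalIntegral.integral_eq_sub_of_hasDerivAt hd]
    · simp
    · apply Continuous.intervalIntegrable
      have hu := uu_cont h0 h1
      exact (hu.sub continuous_const).mul (Continuous.div (by fun_prop) (by fun_prop) (fun x => (hq x).ne'))
  refine ⟨Real.sqrt (4 * L ^ 2 / (1 - L ^ 2)) * (1 / (2 * L)), by positivity, ?_⟩
  have h4 : JJ L (bb L) m = Real.sqrt (4 * L ^ 2 / (1 - L ^ 2)) *
      ∫ x in (0:ℝ)..(Real.pi / 2), (uu L x - m) * (Real.cos x / (1 - L ^ 2 * Real.sin x ^ 2)) := by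
    unfold JJ
    rw [← intervalIntegral.integral_const_mul]
    refine congr_Ioo _ _ (by positivity) _ _ fun x hx => ?_
    have hc : 0 < Real.cos x := Real.cos_pos_of_mem_Ioo ⟨by linarith [hx.1, Real.pi_pos], hx.2⟩
    have h5 : bb L - uu L x = 4 * L ^ 2 / (1 - L ^ 2) * (Real.cos x ^ 2 / (1 - L ^ 2 * Real.sin x ^ 2)) := by
      unfold bb uu
      have := (hq x).ne'
      rw [Real.cos_sq']
      field_simp
      ring
    rw [h5, Real.sqrt_mul (by positivity), Real.sqrt_div (sq_nonneg _), Real.sqrt_sq hc.le]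
    have h6 := Real.mul_self_sqrt (hq x).le
    have h7 := Real.sqrt_pos.2 (hq x)
    set w := Real.sqrt (1 - L ^ 2 * Real.sin x ^ 2)
    rw [← h6]
    field_simp
  rw [h4, key]
  have e7 : 1 - L ^ 2 = (1 - L) * (1 + L) := by ring
  rw [mul_assoc]
  congr 1
  rw [e7]
  field_simp
  ring

theorem ND {L l : ℝ} (h0 : 0 < L) (h1 : L < l) (h2 : l < 1) (ξ : ℝ)
    (hη : lpar ((1 + L) / (1 - L)) = L) (hα : lpar ((1 + l) / (1 - l)) = l) :
    0 < Dfun ((1 + L) / (1 - L)) ((1 + l) / (1 - l)) ∧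
    ∃ c > 0, Nfun ((1 + L) / (1 - L)) ((1 + l) / (1 - l)) - ξ * Dfun ((1 + L) / (1 - L)) ((1 + l) / (1 - l)) =
      - c * JJ L (bb l) ((bb L - bb l) / 2 - ξ) := by
  have hl : 0 < l := h0.trans h1
  have hL1 := h1.trans h2
  have hk : (L / l) ^ 2 < 1 := by
    rw [div_pow, div_lt_one (by positivity)]; nlinarith
  have hW := W_cont hk
  have hu := uu_cont h0 hL1
  have hK : 0 < ellK (L / l) := by
    rw [ellK_eq]
    apply intervalIntegral.intervalIntegral_pos_of_pos (hW.intervalIntegrable _ _)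
    · intro x
      have := Real.sqrt_pos.2 (q_pos hk (sq_nonneg _) x)
      positivity
    · linarith [Real.pi_pos]
  have h3 : 0 < 1 - l ^ 2 := by nlinarith
  have hwt : ∀ x, (bb l - uu L x) * (1 / Real.sqrt (1 - (L / l) ^ 2 * Real.sin x ^ 2)) =
      Real.sqrt (4 * l ^ 2 / (1 - l ^ 2)) * (Real.sqrt (bb l - uu L x) * (1 / Real.sqrt (1 - L ^ 2 * Real.sin x ^ 2))) := by
    intro x
    have hq := q_pos (m := L ^ 2) (by nlinarith) (sq_nonneg _) x
    have hp : 0 < bb l - uu L x := by linarith [uu_le h0 hL1 x, bb_lt h0 h1 h2]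
    have e : 1 - (L / l) ^ 2 * Real.sin x ^ 2 = (bb l - uu L x) * (1 - L ^ 2 * Real.sin x ^ 2) / (4 * l ^ 2 / (1 - l ^ 2)) := by
      unfold bb uu
      have := hq.ne'
      field_simp
      ring
    rw [e, Real.sqrt_div (by positivity), Real.sqrt_mul hp.le]
    have h6 := Real.mul_self_sqrt hp.le
    have h7 := Real.sqrt_pos.2 hp
    have h8 := Real.sqrt_pos.2 hq
    have h9 := Real.sqrt_pos.2 (show 0 < 4 * l ^ 2 / (1 - l ^ 2) by positivity)
    set w := Real.sqrt (bb l - uu L x)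
    rw [← h6]
    field_simp
  have hPi : 4 * ellPi (L ^ 2) (L / l) =
      (∫ x in (0:ℝ)..(Real.pi / 2), uu L x * (1 / Real.sqrt (1 - (L / l) ^ 2 * Real.sin x ^ 2))) + 2 * ellK (L / l) := by
    rw [ellPi_eq, ellK_eq, ← intervalIntegral.integral_const_mul, ← intervalIntegral.integral_const_mul,
      ← intervalIntegral.integral_add
        (Continuous.intervalIntegrable (by fun_prop) _ _) (Continuous.intervalIntegrable (by fun_prop) _ _)]
    congr 1
    ext x
    unfold uu
    ring
  have hQ : (∫ x in (0:ℝ)..(Real.pi / 2), (uu L x ^ 2 - 2) * (1 / Real.sqrt (1 - (L / l) ^ 2 * Real.sin x ^ 2))) =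
      (∫ x in (0:ℝ)..(Real.pi / 2), uu L x ^ 2 * (1 / Real.sqrt (1 - (L / l) ^ 2 * Real.sin x ^ 2))) - 2 * ellK (L / l) := by
    rw [ellK_eq, ← intervalIntegral.integral_const_mul,
      ← intervalIntegral.integral_sub
        (Continuous.intervalIntegrable (by fun_prop) _ _) (Continuous.intervalIntegrable (by fun_prop) _ _)]
    congr 1
    ext x
    ring
  have hG : Real.sqrt (4 * l ^ 2 / (1 - l ^ 2)) * GG L (bb l) = bb l * ellK (L / l) -
      (∫ x in (0:ℝ)..(Real.pi / 2), uu L x * (1 / Real.sqrt (1 - (L / l) ^ 2 * Real.sin x ^ 2))) := by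
    unfold GG
    rw [ellK_eq, ← intervalIntegral.integral_const_mul, ← intervalIntegral.integral_const_mul,
      ← intervalIntegral.integral_sub
        (Continuous.intervalIntegrable (by fun_prop) _ _) (Continuous.intervalIntegrable (by fun_prop) _ _)]
    congr 1
    ext x
    rw [← hwt]
    ring
  have hJ : Real.sqrt (4 * l ^ 2 / (1 - l ^ 2)) * JJ L (bb l) 0 =
      bb l * (∫ x in (0:ℝ)..(Real.pi / 2), uu L x * (1 / Real.sqrt (1 - (L / l) ^ 2 * Real.sin x ^ 2))) -
      (∫ x in (0:ℝ)..(Real.pi / 2), uu L x ^ 2 * (1 / Real.sqrt (1 - (L / l) ^ 2 * Real.sin x ^ 2))) := by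
    unfold JJ
    rw [← intervalIntegral.integral_const_mul, ← intervalIntegral.integral_const_mul,
      ← intervalIntegral.integral_sub
        (Continuous.intervalIntegrable (by fun_prop) _ _) (Continuous.intervalIntegrable (by fun_prop) _ _)]
    congr 1
    ext x
    rw [mul_left_comm, ← hwt]
    ring
  have h9 := Real.sqrt_pos.2 (show 0 < 4 * l ^ 2 / (1 - l ^ 2) by positivity)
  have hGp := GG_pos h0 hL1 (bb_lt h0 h1 h2)
  have hkf : kfun ((1 + L) / (1 - L)) ((1 + l) / (1 - l)) = L / l := by
    unfold kfun; rw [hη, hα]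
  have hbl := bb_eq hl h2
  have hbL := bb_eq h0 hL1
  have hD : Dfun ((1 + L) / (1 - L)) ((1 + l) / (1 - l)) =
      Real.sqrt (4 * l ^ 2 / (1 - l ^ 2)) * GG L (bb l) / ellK (L / l) := by
    unfold Dfun
    rw [hkf, hη, hPi, hG, hbl]
    field_simp
    ring
  have hα2 : -((1 + l) / (1 - l)) ^ 2 - (((1 + l) / (1 - l))⁻¹) ^ 2 = 2 - bb l ^ 2 := by
    rw [← hbl]
    have e3 : 0 < 1 - l := by linarith
    have e5 : 0 < 1 + l := by linarith
    field_simp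
    ring
  refine ⟨by rw [hD]; positivity, Real.sqrt (4 * l ^ 2 / (1 - l ^ 2)) / ellK (L / l), by positivity, ?_⟩
  rw [JJ_shift h0 hL1 (bb l) 0]
  unfold Nfun
  rw [hα2, Q_eq h0 h1 h2, hQ, hD]
  have e : (1 + l) / (1 - l) + ((1 + l) / (1 - l))⁻¹ + (1 + L) / (1 - L) + ((1 + L) / (1 - L))⁻¹ = bb l + bb L := by
    rw [← hbl, ← hbL]; ring
  rw [e]
  set S := Real.sqrt (4 * l ^ 2 / (1 - l ^ 2))
  set G := GG L (bb l)
  set J := JJ L (bb l) 0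
  set A := ∫ x in (0:ℝ)..(Real.pi / 2), uu L x * (1 / Real.sqrt (1 - (L / l) ^ 2 * Real.sin x ^ 2))
  set B := ∫ x in (0:ℝ)..(Real.pi / 2), uu L x ^ 2 * (1 / Real.sqrt (1 - (L / l) ^ 2 * Real.sin x ^ 2))
  have hB : B = bb l * A - S * J := by linarith
  have hA : A = bb l * ellK (L / l) - S * G := by linarith
  rw [hB, hA]
  field_simp
  ring

theorem ND' {η α : ℝ} (h1 : 1 < η) (h2 : η < α) (ξ : ℝ) :
    0 < Dfun η α ∧ ∃ c > 0, Nfun η α - ξ * Dfun η α =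
      - c * JJ (lpar η) (α + α⁻¹) ((bb (lpar η) - (α + α⁻¹)) / 2 - ξ) := by
  obtain ⟨a1, a2, a3⟩ := lpar_mem h1
  obtain ⟨b1, b2, b3⟩ := lpar_mem (h1.trans h2)
  have hlt : lpar η < lpar α := by
    unfold lpar
    rw [div_lt_div_iff₀ (by linarith) (by linarith)]
    nlinarith
  have hb := bb_eq b1 b2
  have := ND a1 hlt b2 ξ (by rw [← a3]) (by rw [← b3])
  rw [← hb] at this
  rw [← a3, ← b3] at this
  exact this

/- STATEMENT 19: Fix 1 < η₁ < η₂ and set ξ_crit := N(η₂)/D(η₂).  Then for every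
real ξ with ξ_crit < ξ < −(η₁ − η₁⁻¹)/ln η₁, there exists exactly one
α ∈ (η₁, η₂) such that N(α) = ξ · D(α). -/
theorem stmt19 (η₁ η₂ : ℝ) (h1 : 1 < η₁) (h2 : η₁ < η₂) (ξ : ℝ)
    (hlow : Nfun η₁ η₂ / Dfun η₁ η₂ < ξ)
    (hhigh : ξ < -(η₁ - η₁⁻¹) / Real.log η₁) :
    ∃! α, α ∈ Set.Ioo η₁ η₂ ∧ Nfun η₁ α = ξ * Dfun η₁ α := by
  obtain ⟨a1, a2, a3⟩ := lpar_mem h1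
  have hinc : ∀ x y : ℝ, 1 < x → x < y → x + x⁻¹ < y + y⁻¹ := by
    intro x y hx hxy
    have hy : 1 < y := hx.trans hxy
    have : y + y⁻¹ - (x + x⁻¹) = (y - x) * (x * y - 1) / (x * y) := by field_simp; ring
    have h3 : 0 < (y - x) * (x * y - 1) / (x * y) := by
      have : 0 < y - x := by linarith
      have : 0 < x * y - 1 := by nlinarith
      have : 0 < x * y := by nlinarith
      positivity
    linarith
  have hbL : η₁ + η₁⁻¹ = bb (lpar η₁) := by
    have := bb_eq a1 a2
    rwa [← a3] at this
  have hiff : ∀ α, η₁ < α → (Nfun η₁ α = ξ * Dfun η₁ α ↔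
      JJ (lpar η₁) (α + α⁻¹) ((bb (lpar η₁) - (α + α⁻¹)) / 2 - ξ) = 0) := by
    intro α hα
    obtain ⟨_, c, hc, h⟩ := ND' h1 hα ξ
    constructor
    · intro h3
      have : -c * JJ (lpar η₁) (α + α⁻¹) ((bb (lpar η₁) - (α + α⁻¹)) / 2 - ξ) = 0 := by linarith
      rcases mul_eq_zero.1 this with h4 | h4
      · linarith
      · exact h4
    · intro h3
      rw [h3] at h
      linarith
  have hcont : ContinuousOn (fun α => JJ (lpar η₁) (α + α⁻¹) ((bb (lpar η₁) - (α + α⁻¹)) / 2 - ξ))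
      (Set.Icc η₁ η₂) := by
    have hi : ContinuousOn (fun α : ℝ => α + α⁻¹) (Set.Icc η₁ η₂) :=
      continuousOn_id.add (continuousOn_id.inv₀ (fun x hx => by simp only [id]; linarith [hx.1]))
    exact (JJ_cont a1 a2).comp_continuousOn
      (hi.prodMk (((continuousOn_const.sub hi).div_const 2).sub continuousOn_const))
  have hstart : JJ (lpar η₁) (η₁ + η₁⁻¹) ((bb (lpar η₁) - (η₁ + η₁⁻¹)) / 2 - ξ) < 0 := by
    rw [hbL]
    obtain ⟨c, hc, h⟩ := JJ_start a1 a2 ((bb (lpar η₁) - bb (lpar η₁)) / 2 - ξ)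
    rw [h, ← a3]
    have hlog := Real.log_pos h1
    rw [lt_div_iff₀ hlog] at hhigh
    apply mul_neg_of_pos_of_neg hc
    linarith
  have hend : 0 < JJ (lpar η₁) (η₂ + η₂⁻¹) ((bb (lpar η₁) - (η₂ + η₂⁻¹)) / 2 - ξ) := by
    obtain ⟨hD, c, hc, h⟩ := ND' h1 h2 ξ
    rw [div_lt_iff₀ hD] at hlow
    have : 0 < c * JJ (lpar η₁) (η₂ + η₂⁻¹) ((bb (lpar η₁) - (η₂ + η₂⁻¹)) / 2 - ξ) := by linarith
    exact pos_of_mul_pos_right this hc.le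
  obtain ⟨α, hα, h0⟩ := intermediate_value_Ioo h2.le hcont (show (0:ℝ) ∈ Set.Ioo _ _ from ⟨hstart, hend⟩)
  have huniq : ∀ x y, η₁ < x → x < y →
      JJ (lpar η₁) (x + x⁻¹) ((bb (lpar η₁) - (x + x⁻¹)) / 2 - ξ) = 0 →
      JJ (lpar η₁) (y + y⁻¹) ((bb (lpar η₁) - (y + y⁻¹)) / 2 - ξ) ≠ 0 := by
    intro x y hx hxy h
    exact JJ_unique a1 a2 (by rw [← hbL]; exact hinc _ _ h1 hx) (hinc _ _ (h1.trans hx) hxy) h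
  refine ⟨α, ⟨hα, (hiff α hα.1).2 h0⟩, ?_⟩
  rintro β ⟨hβ, hβ0⟩
  have hβ1 := (hiff β hβ.1).1 hβ0
  rcases lt_trichotomy β α with h | h | h
  · exact absurd h0 (huniq β α hβ.1 h hβ1)
  · exact h
  · exact absurd hβ1 (huniq α β hα.1 h h0)
end
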